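/- For any two sequences a and b with values in a commutative ring R, the Newton product (a ⊠ b)_n = Σ_{i=0}^n Σ_{j=0}^i C(n,i) C(i,j) a_i b_{n-j} satisfies a ⊠ b = [(a ⋆ 1) ⊙ (b ⋆ 1)] ⋆ e, where ⋆ is the binomial (Hurwitz) convolution, ⊙ is the Hadamard (termwise) product, 1 = (1,1,1,...) and e = ((-1)^n)_{n≥0}. -/

import Mathlib

open Finset

/-- Hurwitz (binomial convolution) product of sequences. -/
def hurwitz {R : Type*} [CommRing R] (a b : ℕ → R) : ℕ → R :=
  fun n => ∑ i ∈ Finset.range (n + 1), (n.choose i : R) * a i * b (n - i)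

/-- Hadamard (termwise) product of sequences. -/
def hadamard {R : Type*} [CommRing R] (a b : ℕ → R) : ℕ → R :=
  fun n => a n * b n

/-- Newton (multinomial convolution) product of sequences. -/
def newton {R : Type*} [CommRing R] (a b : ℕ → R) : ℕ → R :=
  fun n => ∑ i ∈ Finset.range (n + 1), ∑ j ∈ Finset.range (i + 1),
    (n.choose i : R) * (i.choose j : R) * a i * b (n - j)

/-! Choose linear functionals `φ`, `ψ` on `R[x]`, `R[y]` with `a n = φ (x ^ n)`, `b n = ψ (y ^ n)`,
and let `Φ = φ ⊗ ψ` be the functional on `R[x] ⊗ R[y] = R[x, y]` sending `x ^ i * y ^ j` to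
`a i * b j`. The Hurwitz product with the powers of `c` translates the variable by `c`, and the
Hadamard product multiplies the two variables, so the right-hand side is
`Φ (((x + 1) * (y + 1) - 1) ^ n)`. This equals `Φ ((x * (y + 1) + y) ^ n)`, whose binomial expansion
is the Newton product. -/

open scoped Polynomial TensorProduct

/-- The moments `φ (x ^ n)` of an element `x` of an algebra under a linear functional `φ`. Writing a
sequence in this umbral form turns products of sequences into operations on elements. -/
def momentSeq {R A : Type*} [CommSemiring R] [Semiring A] [Algebra R A]
    (φ : Module.Dual R A) (x : A) : ℕ → R :=
  fun n => φ (x ^ n)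

theorem exists_momentSeq_X_eq {R : Type*} [CommSemiring R] (a : ℕ → R) :
    ∃ φ : Module.Dual R R[X], momentSeq φ Polynomial.X = a := by
  refine ⟨(Polynomial.basisMonomials R).constr R a, funext fun n => ?_⟩
  rw [momentSeq, ← Polynomial.monomial_one_right_eq_X_pow]
  simpa only [Polynomial.coe_basisMonomials] using
    (Polynomial.basisMonomials R).constr_basis R a n

theorem mul_add_one_add_pow {A : Type*} [Semiring A] {u v : A} (huv : Commute u v) (n : ℕ) :
    (u * (v + 1) + v) ^ n = ∑ i ∈ range (n + 1), ∑ j ∈ range (i + 1),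
      (n.choose i * i.choose j) • (u ^ i * v ^ (n - j)) := by
  have huv₁ : Commute u (v + 1) := huv.add_right (Commute.one_right u)
  have hv : Commute (v + 1) v := (Commute.refl v).add_left (Commute.one_left v)
  rw [(huv.mul_left hv).add_pow]
  refine sum_congr rfl fun i hi => ?_
  rw [huv₁.mul_pow, add_comm v 1, (Commute.one_left v).add_pow]
  simp only [mul_sum, sum_mul]
  refine sum_congr rfl fun j hj => ?_
  have hexp : i - j + (n - i) = n - j := by
    rw [mem_range] at hi hj
    omega
  calc u ^ i * (1 ^ j * v ^ (i - j) * (i.choose j : A)) * v ^ (n - i) * (n.choose i : A)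
      = (n.choose i * i.choose j) • (u ^ i * (v ^ (i - j) * v ^ (n - i))) := by
        simp only [one_pow, one_mul, ← nsmul_eq_mul', mul_smul_comm, smul_mul_assoc, mul_smul,
          mul_assoc]
    _ = (n.choose i * i.choose j) • (u ^ i * v ^ (n - j)) := by rw [← pow_add, hexp]

section Products

variable {R A B : Type*} [CommRing R] [Semiring A] [Algebra R A] [Semiring B] [Algebra R B]

theorem hurwitz_momentSeq_pow (φ : Module.Dual R A) (x : A) (c : R) :
    hurwitz (momentSeq φ x) (fun n => c ^ n) = momentSeq φ (x + algebraMap R A c) := by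
  funext n
  rw [momentSeq, (Algebra.commute_algebraMap_right c x).add_pow, map_sum]
  refine sum_congr rfl fun i _ => ?_
  rw [← nsmul_eq_mul', map_nsmul, ← map_pow, ← Algebra.commutes, ← Algebra.smul_def, map_smul,
    nsmul_eq_mul, smul_eq_mul, momentSeq, mul_assoc, mul_comm (c ^ (n - i))]

theorem hurwitz_momentSeq_one (φ : Module.Dual R A) (x : A) :
    hurwitz (momentSeq φ x) (fun _ => 1) = momentSeq φ (x + 1) := by
  simpa only [one_pow, map_one] using hurwitz_momentSeq_pow φ x 1

theorem hadamard_momentSeq (φ : Module.Dual R A) (ψ : Module.Dual R B) (x : A) (y : B) :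
    hadamard (momentSeq φ x) (momentSeq ψ y) =
      momentSeq (TensorProduct.dualDistrib R A B (φ ⊗ₜ ψ)) (x ⊗ₜ[R] y) := by
  funext n
  rw [hadamard, momentSeq, momentSeq, momentSeq, Algebra.TensorProduct.tmul_pow,
    TensorProduct.dualDistrib_apply]

theorem newton_momentSeq (φ : Module.Dual R A) (ψ : Module.Dual R B) (x : A) (y : B) :
    newton (momentSeq φ x) (momentSeq ψ y) =
      momentSeq (TensorProduct.dualDistrib R A B (φ ⊗ₜ ψ)) (x ⊗ₜ[R] (y + 1) + 1 ⊗ₜ[R] y) := by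
  have hcomm : Commute (x ⊗ₜ[R] (1 : B)) ((1 : A) ⊗ₜ[R] y) :=
    (Commute.one_right x).tmul (Commute.one_left y)
  have hfactor : x ⊗ₜ[R] (y + 1) = x ⊗ₜ[R] (1 : B) * ((1 : A) ⊗ₜ[R] y + 1) := by
    rw [Algebra.TensorProduct.one_def, ← TensorProduct.tmul_add,
      Algebra.TensorProduct.tmul_mul_tmul, mul_one, one_mul]
  funext n
  rw [momentSeq, hfactor, mul_add_one_add_pow hcomm]
  simp only [map_sum, map_nsmul, Algebra.TensorProduct.tmul_pow, one_pow,
    Algebra.TensorProduct.tmul_mul_tmul, mul_one, one_mul, TensorProduct.dualDistrib_apply]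
  simp only [newton, momentSeq, nsmul_eq_mul, Nat.cast_mul, mul_assoc]

theorem add_one_tmul_add_one_add_algebraMap_neg_one (x : A) (y : B) :
    (x + 1) ⊗ₜ[R] (y + 1) + algebraMap R (A ⊗[R] B) (-1) = x ⊗ₜ[R] (y + 1) + 1 ⊗ₜ[R] y := by
  have hcancel : (1 : A) ⊗ₜ[R] (1 : B) + algebraMap R (A ⊗[R] B) (-1) = 0 := by
    rw [← Algebra.TensorProduct.one_def, ← map_one (algebraMap R (A ⊗[R] B)), ← map_add,
      add_neg_cancel, map_zero]
  rw [TensorProduct.add_tmul, TensorProduct.tmul_add 1 y 1, add_assoc, add_assoc, hcancel, add_zero]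

end Products

theorem newton_eq_hurwitz_hadamard {R : Type*} [CommRing R] (a b : ℕ → R) :
    newton a b =
      hurwitz (hadamard (hurwitz a (fun _ => (1 : R))) (hurwitz b (fun _ => (1 : R))))
        (fun n => (-1 : R) ^ n) := by
  obtain ⟨φ, rfl⟩ := exists_momentSeq_X_eq a
  obtain ⟨ψ, rfl⟩ := exists_momentSeq_X_eq b
  rw [newton_momentSeq, hurwitz_momentSeq_one, hurwitz_momentSeq_one, hadamard_momentSeq,
    hurwitz_momentSeq_pow, add_one_tmul_add_one_add_algebraMap_neg_one]
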